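/- Let n ≥ 2 and let κ, μ ∈ ℝⁿ both lie in the Gårding cone Γ₂ with σ₂(κ) = σ₂(μ). Then σ₂(κ) − σ_{1,1}(κ, μ) ≤ 0, and equality σ₂(κ) = σ_{1,1}(κ, μ) holds if and only if κ = μ. -/

import Mathlib

open Finset

/-- First elementary symmetric polynomial: σ₁(κ) = ∑ i, κ i. -/
noncomputable def sigma1 {n : ℕ} (κ : Fin n → ℝ) : ℝ := ∑ i, κ i

/-- Second elementary symmetric polynomial: σ₂(κ) = ∑_{i<j} κ i * κ j. -/
noncomputable def sigma2 {n : ℕ} (κ : Fin n → ℝ) : ℝ :=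
  ∑ p ∈ Finset.univ.filter (fun p : Fin n × Fin n => p.1 < p.2), κ p.1 * κ p.2

/-- Polarization of σ₂: σ_{1,1}(κ, μ) = (1/2)(σ₁(κ)σ₁(μ) − ∑ i, κ i * μ i). -/
noncomputable def sigma11 {n : ℕ} (κ μ : Fin n → ℝ) : ℝ :=
  (1 / 2) * (sigma1 κ * sigma1 μ - ∑ i, κ i * μ i)

/-!
On the hyperplane `σ₁ = 0` we have `σ₂(v) = -|v|² / 2`, so `σ₂` is negative definite there. For
`κ, μ` in the Gårding cone, `v = σ₁(μ) κ - σ₁(κ) μ` lies on it, and expanding `σ₂(v)` gives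
`2 σ₁(κ) σ₁(μ) (σ₁₁(κ, μ) - √(σ₂(κ) σ₂(μ))) = (σ₁(μ) √σ₂(κ) - σ₁(κ) √σ₂(μ))² + |v|² / 2`,
which is Gårding's inequality `√(σ₂(κ) σ₂(μ)) ≤ σ₁₁(κ, μ)` together with its equality case.
-/

section

variable {n : ℕ} {κ μ : Fin n → ℝ}

lemma sigma1_smul_sub_smul (a b : ℝ) (κ μ : Fin n → ℝ) :
    sigma1 (a • κ - b • μ) = a * sigma1 κ - b * sigma1 μ := by
  simp only [sigma1, Pi.sub_apply, Pi.smul_apply, smul_eq_mul, sum_sub_distrib, mul_sum]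

lemma two_mul_sigma11 (κ μ : Fin n → ℝ) :
    2 * sigma11 κ μ = sigma1 κ * sigma1 μ - κ ⬝ᵥ μ := by
  rw [sigma11, dotProduct]
  ring

lemma two_mul_sigma2 (κ : Fin n → ℝ) : 2 * sigma2 κ = sigma1 κ ^ 2 - κ ⬝ᵥ κ := by
  have sigma2_eq : sigma2 κ = ∑ i, ∑ j ∈ Ioi i, κ i * κ j := by
    simp only [sigma2, sum_filter, Fintype.sum_prod_type, ← filter_lt_eq_Ioi]
  calc 2 * sigma2 κ
      = ∑ i, ∑ j ∈ Ioi i, (κ j * κ i + κ i * κ j) := by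
        simp only [sigma2_eq, two_mul, sum_add_distrib, mul_comm]
    _ = ∑ i, ∑ j ∈ {i}ᶜ, κ j * κ i :=
        sum_sum_Ioi_add_eq_sum_sum_off_diag fun i j ↦ κ i * κ j
    _ = ∑ i, (sigma1 κ - κ i) * κ i := by
        refine sum_congr rfl fun i _ ↦ ?_
        rw [← sum_mul, sigma1, Fintype.sum_eq_sum_compl_add i, add_sub_cancel_right]
    _ = sigma1 κ ^ 2 - κ ⬝ᵥ κ := by
        simp only [sub_mul, sum_sub_distrib, ← mul_sum, dotProduct, sq, sigma1]

lemma sigma2_smul_sub_smul (a b : ℝ) (κ μ : Fin n → ℝ) :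
    sigma2 (a • κ - b • μ) =
      a ^ 2 * sigma2 κ - 2 * (a * b) * sigma11 κ μ + b ^ 2 * sigma2 μ := by
  have dotProduct_expand : (a • κ - b • μ) ⬝ᵥ (a • κ - b • μ) =
      a ^ 2 * κ ⬝ᵥ κ - 2 * (a * b) * κ ⬝ᵥ μ + b ^ 2 * μ ⬝ᵥ μ := by
    simp only [sub_dotProduct, dotProduct_sub, smul_dotProduct, dotProduct_smul, smul_eq_mul,
      dotProduct_comm μ κ]
    ring
  have two_mul_sigma2_sub := two_mul_sigma2 (a • κ - b • μ)
  rw [sigma1_smul_sub_smul, dotProduct_expand] at two_mul_sigma2_sub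
  linear_combination two_mul_sigma2_sub / 2 - a ^ 2 / 2 * two_mul_sigma2 κ
    + a * b * two_mul_sigma11 κ μ - b ^ 2 / 2 * two_mul_sigma2 μ

lemma sigma2_nonpos_of_sigma1_eq_zero (hκ : sigma1 κ = 0) : sigma2 κ ≤ 0 := by
  have dotProduct_self_nonneg : 0 ≤ κ ⬝ᵥ κ := sum_nonneg fun i _ ↦ mul_self_nonneg (κ i)
  linear_combination (two_mul_sigma2 κ + sigma1 κ * hκ + dotProduct_self_nonneg) / 2

lemma eq_zero_of_sigma1_eq_zero_of_sigma2_eq_zero (hκ₁ : sigma1 κ = 0) (hκ₂ : sigma2 κ = 0) :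
    κ = 0 := by
  rw [← dotProduct_self_eq_zero]
  linear_combination two_mul_sigma2 κ + sigma1 κ * hκ₁ - 2 * hκ₂

lemma sigma1_cross_smul_sub (κ μ : Fin n → ℝ) : sigma1 (sigma1 μ • κ - sigma1 κ • μ) = 0 := by
  rw [sigma1_smul_sub_smul]
  ring

lemma two_mul_sigma1_mul_sigma11_sub_sqrt (hκ : 0 ≤ sigma2 κ) (hμ : 0 ≤ sigma2 μ) :
    2 * (sigma1 κ * sigma1 μ) * (sigma11 κ μ - √(sigma2 κ) * √(sigma2 μ)) =
      (sigma1 μ * √(sigma2 κ) - sigma1 κ * √(sigma2 μ)) ^ 2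
        - sigma2 (sigma1 μ • κ - sigma1 κ • μ) := by
  rw [sigma2_smul_sub_smul]
  linear_combination -sigma1 μ ^ 2 * Real.sq_sqrt hκ - sigma1 κ ^ 2 * Real.sq_sqrt hμ

theorem sqrt_sigma2_mul_sqrt_sigma2_le_sigma11 (hκ₁ : 0 < sigma1 κ) (hκ₂ : 0 ≤ sigma2 κ)
    (hμ₁ : 0 < sigma1 μ) (hμ₂ : 0 ≤ sigma2 μ) :
    √(sigma2 κ) * √(sigma2 μ) ≤ sigma11 κ μ := by
  have sigma1_mul_pos : 0 < 2 * (sigma1 κ * sigma1 μ) := by positivity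
  rw [← sub_nonneg, ← mul_nonneg_iff_of_pos_left sigma1_mul_pos,
    two_mul_sigma1_mul_sigma11_sub_sqrt hκ₂ hμ₂, sub_nonneg]
  exact (sigma2_nonpos_of_sigma1_eq_zero (sigma1_cross_smul_sub κ μ)).trans (sq_nonneg _)

lemma smul_eq_smul_of_sqrt_sigma2_mul_eq_sigma11 (hκ₁ : sigma1 κ ≠ 0) (hκ₂ : 0 ≤ sigma2 κ)
    (hμ₂ : 0 ≤ sigma2 μ) (heq : √(sigma2 κ) * √(sigma2 μ) = sigma11 κ μ) :
    √(sigma2 μ) • κ = √(sigma2 κ) • μ := by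
  have cross_sub_nonpos := sigma2_nonpos_of_sigma1_eq_zero (sigma1_cross_smul_sub κ μ)
  have identity := two_mul_sigma1_mul_sigma11_sub_sqrt hκ₂ hμ₂
  rw [heq, sub_self, mul_zero] at identity
  have sqrt_ratio : sigma1 μ * √(sigma2 κ) = sigma1 κ * √(sigma2 μ) := by
    rw [← sub_eq_zero, ← sq_eq_zero_iff]
    exact le_antisymm (by linarith) (sq_nonneg _)
  have cross_eq : sigma1 μ • κ = sigma1 κ • μ := by
    rw [← sub_eq_zero]
    apply eq_zero_of_sigma1_eq_zero_of_sigma2_eq_zero (sigma1_cross_smul_sub κ μ)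
    rw [sqrt_ratio, sub_self] at identity
    linarith
  refine smul_right_injective _ hκ₁ ?_
  calc sigma1 κ • √(sigma2 μ) • κ
      = √(sigma2 κ) • sigma1 μ • κ := by rw [smul_smul, smul_smul, ← sqrt_ratio, mul_comm]
    _ = sigma1 κ • √(sigma2 κ) • μ := by rw [cross_eq, smul_comm]

lemma sqrt_sigma2_mul_eq_sigma11_of_smul_eq_smul (hκ : 0 < sigma2 κ) (hμ : 0 < sigma2 μ)
    (h : √(sigma2 μ) • κ = √(sigma2 κ) • μ) : √(sigma2 κ) * √(sigma2 μ) = sigma11 κ μ := by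
  have expansion := sigma2_smul_sub_smul √(sigma2 μ) √(sigma2 κ) κ μ
  have sigma2_zero : sigma2 (0 : Fin n → ℝ) = 0 := by simp [sigma2]
  rw [h, sub_self, sigma2_zero] at expansion
  have sqrt_mul_pos : 0 < √(sigma2 κ) * √(sigma2 μ) := by positivity
  refine mul_left_cancel₀ sqrt_mul_pos.ne' ?_
  linear_combination -expansion / 2 + √(sigma2 μ) ^ 2 / 2 * Real.sq_sqrt hκ.le
    + √(sigma2 κ) ^ 2 / 2 * Real.sq_sqrt hμ.le

theorem garding_lemma_general (hκ₁ : 0 < sigma1 κ) (hκ₂ : 0 < sigma2 κ)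
    (hμ₁ : 0 < sigma1 μ) (hμ₂ : 0 < sigma2 μ) :
    √(sigma2 κ) * √(sigma2 μ) ≤ sigma11 κ μ ∧
      (√(sigma2 κ) * √(sigma2 μ) = sigma11 κ μ ↔ √(sigma2 μ) • κ = √(sigma2 κ) • μ) :=
  ⟨sqrt_sigma2_mul_sqrt_sigma2_le_sigma11 hκ₁ hκ₂.le hμ₁ hμ₂.le,
    smul_eq_smul_of_sqrt_sigma2_mul_eq_sigma11 hκ₁.ne' hκ₂.le hμ₂.le,
    sqrt_sigma2_mul_eq_sigma11_of_smul_eq_smul hκ₂ hμ₂⟩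

end

/-- For κ, μ ∈ Γ₂ with σ₂(κ) = σ₂(μ): σ₂(κ) − σ_{1,1}(κ, μ) ≤ 0, with
    equality if and only if κ = μ. -/
theorem garding_lemma {n : ℕ} (hn : 2 ≤ n) (κ μ : Fin n → ℝ)
    (hκ1 : sigma1 κ > 0) (hκ2 : sigma2 κ > 0)
    (hμ1 : sigma1 μ > 0) (hμ2 : sigma2 μ > 0)
    (hσ : sigma2 κ = sigma2 μ) :
    sigma2 κ - sigma11 κ μ ≤ 0 ∧ (sigma2 κ = sigma11 κ μ ↔ κ = μ) := by
  have garding := garding_lemma_general hκ1 hκ2 hμ1 hμ2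
  rwa [← hσ, Real.mul_self_sqrt hκ2.le, ← sub_nonpos,
    smul_right_inj (Real.sqrt_pos.2 hκ2).ne'] at garding
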